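/- arXiv:1811.07317 — 5 statements merged into one kernel-verified Lean document; each statement's English description precedes it below -/
import Mathlib

section
/- Let (Z_n) be a branching process in the fixed environment (f_i) and (Z'_n) a branching process in the shifted environment (f_{1+i}), with almost-sure limits W(s)=lim_n Z_n·h_n(s) and W'(s)=lim_n Z'_n·h_n(θ,s). Then for every u > 0 and s ∈ (0,∞), the Laplace transforms χ(u;s):=E[exp(−u·W(s))] and χ'(u;s):=E[exp(−u·W'(s))] satisfy the functional equation χ(u;s) = f_0(χ'(u; h_0(s))). -/
open MeasureTheory Filter Topology Set
open scoped ENNReal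

noncomputable section

/-- `f` is the probability generating function `f(x) = ∑_{j≥1} p_j x^j` of a probability
distribution on the positive integers with `p 1 ≠ 1`. -/
def IsPGF (f : ℝ → ℝ) : Prop :=
  ∃ p : ℕ → ℝ, (∀ j, 0 ≤ p j) ∧ p 0 = 0 ∧ p 1 ≠ 1 ∧ HasSum p 1 ∧
    ∀ x ∈ Set.Icc (0 : ℝ) 1, HasSum (fun j => p j * x ^ j) (f x)

/-- `g` is the inverse of `f` on `[0,1]`. -/
def IsInvOn01 (g f : ℝ → ℝ) : Prop :=
  ∀ x ∈ Set.Icc (0 : ℝ) 1, g (f x) = x ∧ f (g x) = x ∧ g x ∈ Set.Icc (0 : ℝ) 1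

/-- `h(s) = -log f⁻¹(e^{-s})`, expressed through the inverse `g = f⁻¹`. -/
def hfun (g : ℝ → ℝ) (s : ℝ) : ℝ := - Real.log (g (Real.exp (-s)))

/-- `h_n(s) = h_{n-1}(⋯(h_0(s))⋯)`, built from the sequence `g i = f_i⁻¹` of inverses. -/
def hIter (g : ℕ → ℝ → ℝ) : ℕ → ℝ → ℝ
  | 0, s => s
  | n + 1, s => hfun (g (n : ℕ)) (hIter g n s)

/-- `(Z n)` is a branching process in the fixed environment given by the pgfs `f n`:
`Z 0 = 1`, each `Z n` is a positive-integer valued `F n`-measurable variable, and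
`E[t ^ Z (n+1) | F n] = (f n t) ^ Z n` a.s. for every `t ∈ [0,1]`. -/
def IsBranchingProcess {Ω : Type*} {mΩ : MeasurableSpace Ω} (μ : Measure Ω)
    (F : Filtration ℕ mΩ) (f : ℕ → ℝ → ℝ) (Z : ℕ → Ω → ℕ) : Prop :=
  (∀ ω, Z 0 ω = 1) ∧ (∀ n ω, 1 ≤ Z n ω) ∧ (∀ n, Measurable[F n] (Z n)) ∧
    ∀ n, ∀ t ∈ Set.Icc (0 : ℝ) 1,
      (μ[fun ω => t ^ Z (n + 1) ω | F n]) =ᵐ[μ] fun ω => f n t ^ Z n ω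

/-- `exp(-w)` for `w ∈ [0,∞]`, with the convention `exp(-∞) = 0`. -/
def expNeg (w : ℝ≥0∞) : ℝ := if w = ∞ then 0 else Real.exp (-w.toReal)

/-- `s ∈ (0,∞)` is a regular point (analytic definition):
`h_n(t)/h_n(s) → 0` for every `0 < t < s`. -/
def AnalyticRegular (g : ℕ → ℝ → ℝ) (s : ℝ) : Prop :=
  ∀ t, 0 < t → t < s → Tendsto (fun n => hIter g n t / hIter g n s) atTop (𝓝 0)

/-- `U` is slowly varying at infinity. -/
def SlowlyVarying (U : ℝ → ℝ) : Prop :=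
  ∀ lam : ℝ, 0 < lam → Tendsto (fun x => U (lam * x) / U x) atTop (𝓝 1)

/-- Generalized inverse `V(x) = inf{y ≥ 0 : U(y) ≥ x}`. -/
def Vfun (U : ℝ → ℝ) (x : ℝ) : ℝ := sInf {y : ℝ | 0 ≤ y ∧ x ≤ U y}

/-- Generalized inverse `G(x) = inf{y ≥ 0 : F(y) ≥ x}` of a distribution function. -/
def Gfun (F : ℝ → ℝ) (x : ℝ) : ℝ := sInf {y : ℝ | 0 ≤ y ∧ x ≤ F y}

/-- `Q(x) = f'(x)(1-x)/(1-f(x))`. -/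
def Qfun (f : ℝ → ℝ) (x : ℝ) : ℝ := deriv f x * (1 - x) / (1 - f x)

/-- Iterated inverse `f_n^{(-1)} = f_{n-1}^{(-1)} ∘ ⋯ ∘ f_0^{(-1)}`, the inverse of the
composition `f_n = f_0 ∘ f_1 ∘ ⋯ ∘ f_{n-1}`, built from the inverses `g i = f_i⁻¹`. -/
def fCompInv (g : ℕ → ℝ → ℝ) : ℕ → ℝ → ℝ
  | 0, t => t
  | n + 1, t => g n (fCompInv g n t)


lemma pgf_zero {f : ℝ → ℝ} (hf : IsPGF f) : f 0 = 0 := by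
  obtain ⟨p, hp, hp0, hp1, hs, h⟩ := hf
  have h0 := h 0 (by simp)
  refine h0.unique ?_
  convert hasSum_zero using 2 with j
  rcases j with _ | j <;> simp [hp0]

lemma pgf_one {f : ℝ → ℝ} (hf : IsPGF f) : f 1 = 1 := by
  obtain ⟨p, hp, hp0, hp1, hs, h⟩ := hf
  have h0 := h 1 (by simp)
  refine h0.unique ?_
  simpa using hs

lemma pgf_mem {f : ℝ → ℝ} (hf : IsPGF f) {x : ℝ} (hx : x ∈ Set.Icc (0 : ℝ) 1) :
    f x ∈ Set.Icc (0 : ℝ) 1 := by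
  obtain ⟨p, hp, hp0, hp1, hs, h⟩ := hf
  have h0 := h x hx
  refine ⟨h0.nonneg fun j => mul_nonneg (hp j) (pow_nonneg hx.1 j), ?_⟩
  exact hasSum_le (fun j => mul_le_of_le_one_right (hp j) (pow_le_one₀ hx.1 hx.2)) h0 hs

lemma pgf_cont {f : ℝ → ℝ} (hf : IsPGF f) : ContinuousOn f (Set.Icc (0 : ℝ) 1) := by
  obtain ⟨p, hp, hp0, hp1, hs, h⟩ := hf
  have : ContinuousOn (fun x : ℝ => ∑' j, p j * x ^ j) (Set.Icc (0 : ℝ) 1) := by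
    refine continuousOn_tsum (u := p) (fun j => by fun_prop) hs.summable ?_
    intro j x hx
    rw [Real.norm_eq_abs, abs_of_nonneg (mul_nonneg (hp j) (pow_nonneg hx.1 j))]
    exact mul_le_of_le_one_right (hp j) (pow_le_one₀ hx.1 hx.2)
  exact this.congr fun x hx => (h x hx).tsum_eq.symm

lemma hfun_pos {f g : ℝ → ℝ} (hf : IsPGF f) (hg : IsInvOn01 g f) {s : ℝ} (hs : 0 < s) :
    0 < hfun g s := by
  have he : Real.exp (-s) < 1 := by simpa using hs
  have he0 := Real.exp_pos (-s)
  obtain ⟨-, h2, h3⟩ := hg (Real.exp (-s)) ⟨he0.le, he.le⟩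
  have n0 : g (Real.exp (-s)) ≠ 0 := by
    intro h
    rw [h, pgf_zero hf] at h2
    exact he0.ne h2
  have n1 : g (Real.exp (-s)) ≠ 1 := by
    intro h
    rw [h, pgf_one hf] at h2
    exact he.ne h2.symm
  have := Real.log_neg (lt_of_le_of_ne h3.1 n0.symm) (lt_of_le_of_ne h3.2 n1)
  unfold hfun
  linarith

lemma hIter_pos {f g : ℕ → ℝ → ℝ} (hf : ∀ i, IsPGF (f i)) (hg : ∀ i, IsInvOn01 (g i) (f i))
    {s : ℝ} (hs : 0 < s) (n : ℕ) : 0 < hIter g n s := by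
  induction n with
  | zero => exact hs
  | succ n ih => exact hfun_pos (hf n) (hg n) ih

lemma hIter_shift (g : ℕ → ℝ → ℝ) (s : ℝ) (n : ℕ) :
    hIter g (n + 1) s = hIter (fun i => g (1 + i)) n (hfun (g 0) s) := by
  induction n with
  | zero => rfl
  | succ n ih =>
    rw [hIter, ih, hIter, add_comm 1 n]

/-- The composition `f_0 ∘ ⋯ ∘ f_{n-1}`. -/
def fComp (f : ℕ → ℝ → ℝ) : ℕ → ℝ → ℝ
  | 0, t => t
  | n + 1, t => fComp f n (f n t)

lemma fComp_shift (f : ℕ → ℝ → ℝ) (n : ℕ) (t : ℝ) :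
    fComp f (n + 1) t = f 0 (fComp (fun i => f (1 + i)) n t) := by
  induction n generalizing t with
  | zero => rfl
  | succ n ih =>
    rw [fComp, ih, fComp, add_comm 1 n]

lemma integral_pow_branching {Ω : Type*} {mΩ : MeasurableSpace Ω} (μ : Measure Ω) [IsProbabilityMeasure μ]
    (F : Filtration ℕ mΩ) (f : ℕ → ℝ → ℝ) (hf : ∀ i, IsPGF (f i))
    (Z : ℕ → Ω → ℕ) (hZ : IsBranchingProcess μ F f Z) (n : ℕ) (t : ℝ)
    (ht : t ∈ Set.Icc (0 : ℝ) 1) : ∫ ω, t ^ Z n ω ∂μ = fComp f n t := by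
  obtain ⟨h0, h1, h2, h3⟩ := hZ
  induction n generalizing t with
  | zero => simp [h0, fComp]
  | succ n ih =>
    rw [fComp, ← ih _ (pgf_mem (hf n) ht), ← integral_condExp (F.le n)]
    exact integral_congr_ae (h3 n t ht)

lemma expNeg_eq (w : ℝ≥0∞) : expNeg w = (EReal.exp (-(w : EReal))).toReal := by
  unfold expNeg
  split_ifs with h
  · simp [h]
  · lift w to NNReal using h
    have : (-((w : ℝ≥0∞) : EReal)) = ((-(w : ℝ) : ℝ) : EReal) := by
      rw [EReal.coe_neg]
      rfl
    rw [this, EReal.exp_coe, ENNReal.toReal_ofReal (Real.exp_pos _).le]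
    simp

lemma expNeg_cont : Continuous expNeg := by
  have : expNeg = fun w : ℝ≥0∞ => (EReal.exp (-(w : EReal))).toReal := funext expNeg_eq
  rw [this, continuous_iff_continuousAt]
  intro w
  refine (ENNReal.tendsto_toReal ?_).comp (f := fun w : ℝ≥0∞ => EReal.exp (-(w : EReal))) ?_
  · have : EReal.exp (-(w : EReal)) ≤ EReal.exp 0 := by
      apply EReal.exp_monotone
      rw [EReal.neg_le, neg_zero]
      exact EReal.coe_ennreal_nonneg w
    exact ne_top_of_le_ne_top (by simp) this
  · exact (ENNReal.continuous_exp.comp (continuous_neg.comp continuous_coe_ennreal_ereal)).continuousAt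

lemma integral_tendsto {Ω : Type*} {mΩ : MeasurableSpace Ω} (μ : Measure Ω)
    [IsProbabilityMeasure μ]
    (F : Filtration ℕ mΩ) (f g : ℕ → ℝ → ℝ) (hf : ∀ i, IsPGF (f i))
    (hg : ∀ i, IsInvOn01 (g i) (f i))
    (Z : ℕ → Ω → ℕ) (hZ : IsBranchingProcess μ F f Z) (W : Ω → ℝ≥0∞) (s : ℝ) (hs : 0 < s)
    (hW : ∀ᵐ ω ∂μ,
      Tendsto (fun n => ENNReal.ofReal ((Z n ω : ℝ) * hIter g n s)) atTop (𝓝 (W ω)))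
    (u : ℝ) (hu : 0 < u) :
    Tendsto (fun n => fComp f n (Real.exp (-(u * hIter g n s)))) atTop
      (𝓝 (∫ ω, expNeg (ENNReal.ofReal u * W ω) ∂μ)) := by
  have hmem : ∀ n, Real.exp (-(u * hIter g n s)) ∈ Set.Icc (0 : ℝ) 1 := fun n =>
    ⟨(Real.exp_pos _).le, by
      have := mul_pos hu (hIter_pos hf hg hs n)
      rw [Real.exp_le_one_iff]; linarith⟩
  have heq : ∀ n, fComp f n (Real.exp (-(u * hIter g n s)))
      = ∫ ω, (Real.exp (-(u * hIter g n s))) ^ Z n ω ∂μ := fun n =>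
    (integral_pow_branching μ F f hf Z hZ n _ (hmem n)).symm
  simp_rw [heq]
  refine tendsto_integral_of_dominated_convergence (fun _ => 1) ?_ (integrable_const _) ?_ ?_
  · intro n
    have hm : Measurable (Z n) := (hZ.2.2.1 n).mono (F.le n) le_rfl
    exact (measurable_const.pow hm).aestronglyMeasurable
  · intro n
    refine Eventually.of_forall fun ω => ?_
    rw [Real.norm_eq_abs, abs_of_nonneg (pow_nonneg (hmem n).1 _)]
    exact pow_le_one₀ (hmem n).1 (hmem n).2
  · filter_upwards [hW] with ω hω
    have h1 := (expNeg_cont.tendsto _).comp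
      (((ENNReal.continuous_const_mul (a := ENNReal.ofReal u) ENNReal.ofReal_ne_top).tendsto
        _).comp hω)
    refine h1.congr fun n => ?_
    have hp := hIter_pos hf hg hs n
    have hnn : 0 ≤ u * ((Z n ω : ℝ) * hIter g n s) := by positivity
    simp only [Function.comp]
    rw [← ENNReal.ofReal_mul hu.le, expNeg, if_neg ENNReal.ofReal_ne_top,
      ENNReal.toReal_ofReal hnn, ← Real.exp_nat_mul]
    congr 1
    ring

/-- Let `(Z n)` be a branching process in the fixed environment `(f i)`
and `(Z' n)` one in the shifted environment `(f (1+i))`, with a.s. limits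
`W s = lim Z n · h_n(s)` and `W' s = lim Z' n · h_n(θ,s)`. Then for every `u > 0` and
`s ∈ (0,∞)` the Laplace transforms `χ(u;s) = E[exp(-u·W s)]` and
`χ'(u;s) = E[exp(-u·W' s)]` satisfy `χ(u;s) = f 0 (χ'(u; h_0(s)))`. -/
theorem laplace_functional_equation
    {Ω Ω' : Type*} {mΩ : MeasurableSpace Ω} {mΩ' : MeasurableSpace Ω'}
    (μ : Measure Ω) [IsProbabilityMeasure μ] (μ' : Measure Ω') [IsProbabilityMeasure μ']
    (F : Filtration ℕ mΩ) (F' : Filtration ℕ mΩ')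
    (f g : ℕ → ℝ → ℝ) (hf : ∀ i, IsPGF (f i)) (hg : ∀ i, IsInvOn01 (g i) (f i))
    (Z : ℕ → Ω → ℕ) (hZ : IsBranchingProcess μ F f Z)
    (Z' : ℕ → Ω' → ℕ) (hZ' : IsBranchingProcess μ' F' (fun i => f (1 + i)) Z')
    (W : ℝ → Ω → ℝ≥0∞) (W' : ℝ → Ω' → ℝ≥0∞)
    (hW : ∀ s, 0 < s → ∀ᵐ ω ∂μ,
      Tendsto (fun n => ENNReal.ofReal ((Z n ω : ℝ) * hIter g n s)) atTop (𝓝 (W s ω)))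
    (hW' : ∀ s, 0 < s → ∀ᵐ ω ∂μ',
      Tendsto (fun n => ENNReal.ofReal ((Z' n ω : ℝ) * hIter (fun i => g (1 + i)) n s))
        atTop (𝓝 (W' s ω))) :
    ∀ u, 0 < u → ∀ s, 0 < s →
      ∫ ω, expNeg (ENNReal.ofReal u * W s ω) ∂μ
        = f 0 (∫ ω, expNeg (ENNReal.ofReal u * W' (hfun (g 0) s) ω) ∂μ') := by
  intro u hu s hs
  have hs' := hfun_pos (hf 0) (hg 0) hs
  have hA := (integral_tendsto μ F f g hf hg Z hZ (W s) s hs (hW s hs) u hu).comp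
    (tendsto_add_atTop_nat 1)
  have hB := integral_tendsto μ' F' (fun i => f (1 + i)) (fun i => g (1 + i))
    (fun i => hf (1 + i)) (fun i => hg (1 + i)) Z' hZ' (W' (hfun (g 0) s)) _ hs' (hW' _ hs') u hu
  have hmem : ∀ n, fComp (fun i => f (1 + i)) n
      (Real.exp (-(u * hIter (fun i => g (1 + i)) n (hfun (g 0) s)))) ∈ Set.Icc (0 : ℝ) 1 := by
    intro n
    have hp := hIter_pos (fun i => hf (1 + i)) (fun i => hg (1 + i)) hs' n
    have ht : Real.exp (-(u * hIter (fun i => g (1 + i)) n (hfun (g 0) s)))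
        ∈ Set.Icc (0 : ℝ) 1 := ⟨(Real.exp_pos _).le, by
      have := mul_pos hu hp
      rw [Real.exp_le_one_iff]; linarith⟩
    revert ht
    generalize Real.exp (-(u * hIter (fun i => g (1 + i)) n (hfun (g 0) s))) = t
    clear hp
    induction n generalizing t with
    | zero => exact fun ht => ht
    | succ n ih => exact fun ht => ih _ (pgf_mem (hf (1 + n)) ht)
  have hlim := isClosed_Icc.mem_of_tendsto hB (Eventually.of_forall hmem)
  have hC := (pgf_cont (hf 0) _ hlim).tendsto.comp
    (tendsto_nhdsWithin_iff.2 ⟨hB, Eventually.of_forall hmem⟩)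
  refine tendsto_nhds_unique hA (hC.congr fun n => ?_)
  simp only [Function.comp]
  rw [hIter_shift, fComp_shift]

end
end

section
/- A point s ∈ (0,∞) is regular for the branching process (Z_n) in the fixed environment (f_i) (i.e. P(W(s) ∈ {0,∞}) = 1) if and only if lim_{n→∞} h_n(t)/h_n(s) = 0 for all 0 < t < s, or equivalently if and only if lim_{n→∞} h_n(t)/h_n(s) = ∞ for all s < t < ∞. -/
open MeasureTheory Filter Topology Set
open scoped ENNReal

noncomputable section

namespace RegAux

lemma pgf_mono {f : ℝ → ℝ} (hf : IsPGF f) {x y : ℝ} (hx : x ∈ Set.Icc (0:ℝ) 1)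
    (hy : y ∈ Set.Icc (0:ℝ) 1) (hxy : x ≤ y) : f x ≤ f y := by
  obtain ⟨p, hp, -, -, -, h⟩ := hf
  exact hasSum_le (fun j => mul_le_mul_of_nonneg_left (pow_le_pow_left₀ hx.1 hxy j) (hp j))
    (h x hx) (h y hy)

lemma pgf_zero {f : ℝ → ℝ} (hf : IsPGF f) : f 0 = 0 := by
  obtain ⟨p, hp, h0, -, -, h⟩ := hf
  refine (h 0 (by simp)).unique ?_
  convert hasSum_zero with j
  rcases j with _ | j
  · simp [h0]
  · simp

lemma pgf_one {f : ℝ → ℝ} (hf : IsPGF f) : f 1 = 1 := by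
  obtain ⟨p, hp, h0, -, h1, h⟩ := hf
  refine (h 1 (by simp)).unique ?_
  simpa using h1

lemma inv_lt {f g : ℝ → ℝ} (hf : IsPGF f) (hg : IsInvOn01 g f) {x y : ℝ}
    (hx : x ∈ Set.Icc (0:ℝ) 1) (hy : y ∈ Set.Icc (0:ℝ) 1) (hxy : x < y) : g x < g y := by
  by_contra hc
  push Not at hc
  have := pgf_mono hf (hg y hy).2.2 (hg x hx).2.2 hc
  rw [(hg x hx).2.1, (hg y hy).2.1] at this
  linarith

lemma inv_zero {f g : ℝ → ℝ} (hf : IsPGF f) (hg : IsInvOn01 g f) : g 0 = 0 := by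
  have := (hg 0 (by simp)).1
  rwa [pgf_zero hf] at this

lemma inv_one {f g : ℝ → ℝ} (hf : IsPGF f) (hg : IsInvOn01 g f) : g 1 = 1 := by
  have := (hg 1 (by simp)).1
  rwa [pgf_one hf] at this

lemma exp_mem {s : ℝ} (hs : 0 < s) : Real.exp (-s) ∈ Set.Icc (0:ℝ) 1 :=
  ⟨(Real.exp_pos _).le, Real.exp_le_one_iff.2 (by linarith)⟩

lemma g_pos {f g : ℝ → ℝ} (hf : IsPGF f) (hg : IsInvOn01 g f) {s : ℝ} (hs : 0 < s) :
    0 < g (Real.exp (-s)) := by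
  have := inv_lt hf hg (x := 0) (by simp) (exp_mem hs) (Real.exp_pos _)
  rwa [inv_zero hf hg] at this

lemma g_lt_one {f g : ℝ → ℝ} (hf : IsPGF f) (hg : IsInvOn01 g f) {s : ℝ} (hs : 0 < s) :
    g (Real.exp (-s)) < 1 := by
  have := inv_lt hf hg (y := 1) (exp_mem hs) (by simp) (Real.exp_lt_one_iff.2 (by linarith))
  rwa [inv_one hf hg] at this

lemma exp_hfun {f g : ℝ → ℝ} (hf : IsPGF f) (hg : IsInvOn01 g f) {s : ℝ} (hs : 0 < s) :
    Real.exp (-hfun g s) = g (Real.exp (-s)) := by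
  simp [hfun, Real.exp_log (g_pos hf hg hs)]

lemma hfun_pos {f g : ℝ → ℝ} (hf : IsPGF f) (hg : IsInvOn01 g f) {s : ℝ} (hs : 0 < s) :
    0 < hfun g s := by
  have := Real.log_neg (g_pos hf hg hs) (g_lt_one hf hg hs)
  simp only [hfun]; linarith

lemma hIter_pos {f g : ℕ → ℝ → ℝ} (hf : ∀ i, IsPGF (f i)) (hg : ∀ i, IsInvOn01 (g i) (f i))
    {s : ℝ} (hs : 0 < s) (n : ℕ) : 0 < hIter g n s := by
  induction n with
  | zero => exact hs
  | succ n ih => exact hfun_pos (hf n) (hg n) ih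

lemma hIter_lt {f g : ℕ → ℝ → ℝ} (hf : ∀ i, IsPGF (f i)) (hg : ∀ i, IsInvOn01 (g i) (f i))
    {s t : ℝ} (hs : 0 < s) (hst : s < t) (n : ℕ) : hIter g n s < hIter g n t := by
  induction n with
  | zero => exact hst
  | succ n ih =>
    have h1 := hIter_pos hf hg hs n
    have h2 := hIter_pos hf hg (hs.trans hst) n
    have h3 := inv_lt (hf n) (hg n) (exp_mem h2) (exp_mem h1)
      (Real.exp_lt_exp.2 (neg_lt_neg ih))
    have := Real.log_lt_log (g_pos (hf n) (hg n) h2) h3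
    simp only [hIter, hfun]; linarith

lemma expNeg_zero : expNeg 0 = 1 := by simp [expNeg]

lemma expNeg_top : expNeg ∞ = 0 := by simp [expNeg]

lemma expNeg_tendsto {u : ℕ → ℝ} (hu : ∀ n, 0 ≤ u n) {w : ℝ≥0∞}
    (h : Tendsto (fun n => ENNReal.ofReal (u n)) atTop (𝓝 w)) :
    Tendsto (fun n => Real.exp (-u n)) atTop (𝓝 (expNeg w)) := by
  by_cases hw : w = ∞
  · subst hw
    rw [ENNReal.tendsto_ofReal_nhds_top] at h
    rw [expNeg_top]
    exact Real.tendsto_exp_neg_atTop_nhds_zero.comp h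
  · have h2 := (ENNReal.tendsto_toReal hw).comp h
    have h3 : Tendsto u atTop (𝓝 w.toReal) := by
      refine h2.congr fun n => ?_
      simp [ENNReal.toReal_ofReal (hu n)]
    have h4 : expNeg w = Real.exp (-w.toReal) := by simp [expNeg, hw]
    rw [h4]
    exact (Real.continuous_exp.tendsto _).comp h3.neg

lemma expNeg_nonneg (w : ℝ≥0∞) : 0 ≤ expNeg w := by
  unfold expNeg; split_ifs
  · exact le_rfl
  · positivity

lemma expNeg_le_one (w : ℝ≥0∞) : expNeg w ≤ 1 := by
  unfold expNeg; split_ifs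
  · simp
  · simp

lemma measurable_expNeg : Measurable expNeg := by
  unfold expNeg
  exact Measurable.ite (measurableSet_singleton _) measurable_const
    (Real.measurable_exp.comp ENNReal.measurable_toReal.neg)

/-- indicator of finiteness -/
def ffin (w : ℝ≥0∞) : ℝ := if w = ∞ then 0 else 1

/-- indicator of zero -/
def fzero (w : ℝ≥0∞) : ℝ := if w = 0 then 1 else 0

lemma measurable_ffin : Measurable ffin :=
  Measurable.ite (measurableSet_singleton _) measurable_const measurable_const

lemma measurable_fzero : Measurable fzero :=
  Measurable.ite (measurableSet_singleton _) measurable_const measurable_const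

lemma expNeg_le_ffin (w : ℝ≥0∞) : expNeg w ≤ ffin w := by
  by_cases h : w = ∞
  · simp [expNeg, ffin, h]
  · simpa [ffin, h] using expNeg_le_one w

lemma fzero_le_expNeg (w : ℝ≥0∞) : fzero w ≤ expNeg w := by
  by_cases h : w = 0
  · simp [expNeg, fzero, h]
  · simpa [fzero, h] using expNeg_nonneg w

lemma eq_of_expNeg_eq_ffin {w : ℝ≥0∞} (h : expNeg w = ffin w) : w = 0 ∨ w = ∞ := by
  by_cases hw : w = ∞
  · exact Or.inr hw
  · simp only [expNeg, ffin, hw, if_false, Real.exp_eq_one_iff, neg_eq_zero,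
      ENNReal.toReal_eq_zero_iff, or_false] at h
    exact Or.inl h

lemma eq_of_fzero_eq_expNeg {w : ℝ≥0∞} (h : fzero w = expNeg w) : w = 0 ∨ w = ∞ := by
  by_cases hw : w = ∞
  · exact Or.inr hw
  · by_cases h0 : w = 0
    · exact Or.inl h0
    · simp only [expNeg, fzero, hw, h0, if_false] at h
      exact absurd h (Real.exp_pos _).ne

section
variable {Ω : Type*} {mΩ : MeasurableSpace Ω} {μ : Measure Ω} [IsProbabilityMeasure μ]
    {F : Filtration ℕ mΩ} {f g : ℕ → ℝ → ℝ} {Z : ℕ → Ω → ℕ} {W : ℝ → Ω → ℝ≥0∞}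

lemma integrable_comp {φ : ℝ≥0∞ → ℝ} (hφ : Measurable φ) (h0 : ∀ w, 0 ≤ φ w)
    (h1 : ∀ w, φ w ≤ 1) {V : Ω → ℝ≥0∞} (hV : AEMeasurable V μ) :
    Integrable (fun ω => φ (V ω)) μ :=
  Integrable.of_bound (hφ.comp_aemeasurable hV).aestronglyMeasurable 1
    (ae_of_all _ fun ω => by rw [Real.norm_eq_abs, abs_of_nonneg (h0 _)]; exact h1 _)

lemma aemeas_W (hZ : IsBranchingProcess μ F f Z)
    (hW : ∀ s, 0 < s → ∀ᵐ ω ∂μ,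
      Tendsto (fun n => ENNReal.ofReal ((Z n ω : ℝ) * hIter g n s)) atTop (𝓝 (W s ω)))
    {s : ℝ} (hs : 0 < s) : AEMeasurable (W s) μ := by
  refine aemeasurable_of_tendsto_metrizable_ae' (fun n => ?_) (hW s hs)
  have hm : Measurable (Z n) := (hZ.2.2.1 n).mono (F.le n) le_rfl
  have : Measurable fun ω => ENNReal.ofReal ((Z n ω : ℝ) * hIter g n s) := by
    exact ENNReal.measurable_ofReal.comp
      (((measurable_from_top (f := fun k : ℕ => (k : ℝ))).comp hm).mul_const _)
  exact this.aemeasurable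

lemma integral_step (hf : ∀ i, IsPGF (f i)) (hg : ∀ i, IsInvOn01 (g i) (f i))
    (hZ : IsBranchingProcess μ F f Z) {s : ℝ} (hs : 0 < s) (n : ℕ) :
    ∫ ω, Real.exp (-hIter g n s) ^ Z n ω ∂μ = Real.exp (-s) := by
  induction n with
  | zero => simp [hZ.1, hIter]
  | succ n ih =>
    have hp := hIter_pos hf hg hs n
    have hp' := hIter_pos hf hg hs (n + 1)
    have h := hZ.2.2.2 n _ (exp_mem hp')
    rw [← integral_condExp (F.le n), integral_congr_ae h, ← ih]
    have : f n (Real.exp (-hIter g (n + 1) s)) = Real.exp (-hIter g n s) := by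
      simp only [hIter]
      rw [exp_hfun (hf n) (hg n) hp, (hg n _ (exp_mem hp)).2.1]
    rw [this]

lemma integral_W (hf : ∀ i, IsPGF (f i)) (hg : ∀ i, IsInvOn01 (g i) (f i))
    (hZ : IsBranchingProcess μ F f Z)
    (hW : ∀ s, 0 < s → ∀ᵐ ω ∂μ,
      Tendsto (fun n => ENNReal.ofReal ((Z n ω : ℝ) * hIter g n s)) atTop (𝓝 (W s ω)))
    {s : ℝ} (hs : 0 < s) : ∫ ω, expNeg (W s ω) ∂μ = Real.exp (-s) := by
  have key : Tendsto (fun n => ∫ ω, Real.exp (-hIter g n s) ^ Z n ω ∂μ) atTop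
      (𝓝 (∫ ω, expNeg (W s ω) ∂μ)) := by
    refine tendsto_integral_of_dominated_convergence (fun _ => 1) (fun n => ?_)
      (integrable_const _) (fun n => ae_of_all _ fun ω => ?_) ?_
    · have hm : Measurable (Z n) := (hZ.2.2.1 n).mono (F.le n) le_rfl
      exact ((measurable_from_top (f := fun k : ℕ => Real.exp (-hIter g n s) ^ k)).comp
        hm).aestronglyMeasurable
    · have hm := exp_mem (hIter_pos hf hg hs n)
      rw [Real.norm_eq_abs, abs_of_nonneg (pow_nonneg hm.1 _)]
      exact pow_le_one₀ hm.1 hm.2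
    · filter_upwards [hW s hs] with ω hω
      have := expNeg_tendsto
        (fun n => mul_nonneg (Nat.cast_nonneg _) (hIter_pos hf hg hs n).le) hω
      refine this.congr fun n => ?_
      rw [← Real.exp_nat_mul]; ring_nf
  exact tendsto_nhds_unique key
    (tendsto_const_nhds.congr fun n => (integral_step hf hg hZ hs n).symm)

lemma reg_iff_ae {V : Ω → ℝ≥0∞} (hV : AEMeasurable V μ) :
    μ {ω | V ω = 0 ∨ V ω = ∞} = 1 ↔ ∀ᵐ ω ∂μ, V ω = 0 ∨ V ω = ∞ := by
  have hm : NullMeasurableSet {ω | V ω = 0 ∨ V ω = ∞} μ :=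
    hV.nullMeasurable ((measurableSet_singleton (0 : ℝ≥0∞)).union (measurableSet_singleton ∞))
  exact (mem_ae_iff_prob_eq_one₀ hm).symm

/-- monotone comparison along a subsequence -/
lemma W_le_of_freq {a b : ℕ → ℝ} {z : ℕ → ℕ} {C : ℝ} (hC : 0 ≤ C)
    {A B : ℝ≥0∞} (hfr : ∃ᶠ n in atTop, a n ≤ C * b n)
    (hA : Tendsto (fun n => ENNReal.ofReal ((z n : ℝ) * a n)) atTop (𝓝 A))
    (hB : Tendsto (fun n => ENNReal.ofReal ((z n : ℝ) * b n)) atTop (𝓝 B)) :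
    A ≤ ENNReal.ofReal C * B := by
  have hB' : Tendsto (fun n => ENNReal.ofReal C * ENNReal.ofReal ((z n : ℝ) * b n)) atTop
      (𝓝 (ENNReal.ofReal C * B)) :=
    ENNReal.Tendsto.const_mul hB (Or.inr ENNReal.ofReal_ne_top)
  refine le_of_tendsto_of_tendsto_of_frequently hA hB' (hfr.mono fun n hn => ?_)
  rw [← ENNReal.ofReal_mul hC]
  apply ENNReal.ofReal_le_ofReal
  calc (z n : ℝ) * a n ≤ z n * (C * b n) := by gcongr
    _ = _ := by ring

lemma W_eq_of_ratio {a b : ℕ → ℝ} {z : ℕ → ℕ} {A B ρ : ℝ≥0∞}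
    (ha : ∀ n, 0 < a n) (hb : ∀ n, 0 < b n)
    (hr : Tendsto (fun n => ENNReal.ofReal (a n / b n)) atTop (𝓝 ρ))
    (h1 : ρ ≠ 0 ∨ B ≠ ∞) (h2 : B ≠ 0 ∨ ρ ≠ ∞)
    (hA : Tendsto (fun n => ENNReal.ofReal ((z n : ℝ) * a n)) atTop (𝓝 A))
    (hB : Tendsto (fun n => ENNReal.ofReal ((z n : ℝ) * b n)) atTop (𝓝 B)) :
    A = ρ * B := by
  refine tendsto_nhds_unique hA ((ENNReal.Tendsto.mul hr h1 hB h2).congr fun n => ?_)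
  rw [← ENNReal.ofReal_mul (div_pos (ha n) (hb n)).le]
  congr 1
  have := (hb n).ne'
  field_simp

lemma exp_neg_le_of_lt {s c : ℝ} (hs : 0 < s) (h : ∀ t, 0 < t → t < s → c ≤ Real.exp (-t)) :
    c ≤ Real.exp (-s) := by
  have hc : Tendsto (fun t : ℝ => Real.exp (-t)) (𝓝[<] s) (𝓝 (Real.exp (-s))) :=
    ((Real.continuous_exp.comp continuous_neg).tendsto s).mono_left nhdsWithin_le_nhds
  refine ge_of_tendsto hc ?_
  filter_upwards [Ioo_mem_nhdsLT hs] with t ht using h t ht.1 ht.2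

lemma le_exp_neg_of_gt {s c : ℝ} (h : ∀ t, s < t → Real.exp (-t) ≤ c) :
    Real.exp (-s) ≤ c := by
  have hc : Tendsto (fun t : ℝ => Real.exp (-t)) (𝓝[>] s) (𝓝 (Real.exp (-s))) :=
    ((Real.continuous_exp.comp continuous_neg).tendsto s).mono_left nhdsWithin_le_nhds
  refine le_of_tendsto hc ?_
  filter_upwards [self_mem_nhdsWithin] with t ht using h t ht

end

end RegAux

/-- A point `s ∈ (0,∞)` is regular for the branching process `(Z n)`
in the fixed environment `(f i)` (i.e. `P(W s ∈ {0,∞}) = 1`) if and only if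
`h_n(t)/h_n(s) → 0` for all `0 < t < s`, or equivalently iff `h_n(t)/h_n(s) → ∞`
for all `s < t < ∞`. -/
theorem regular_iff_ratio_tendsto
    {Ω : Type*} {mΩ : MeasurableSpace Ω} (μ : Measure Ω) [IsProbabilityMeasure μ]
    (F : Filtration ℕ mΩ) (f g : ℕ → ℝ → ℝ)
    (hf : ∀ i, IsPGF (f i)) (hg : ∀ i, IsInvOn01 (g i) (f i))
    (Z : ℕ → Ω → ℕ) (hZ : IsBranchingProcess μ F f Z)
    (W : ℝ → Ω → ℝ≥0∞)
    (hW : ∀ s, 0 < s → ∀ᵐ ω ∂μ,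
      Tendsto (fun n => ENNReal.ofReal ((Z n ω : ℝ) * hIter g n s)) atTop (𝓝 (W s ω)))
    (s : ℝ) (hs : 0 < s) :
    (μ {ω | W s ω = 0 ∨ W s ω = ∞} = 1 ↔
      ∀ t, 0 < t → t < s → Tendsto (fun n => hIter g n t / hIter g n s) atTop (𝓝 0)) ∧
    ((∀ t, 0 < t → t < s → Tendsto (fun n => hIter g n t / hIter g n s) atTop (𝓝 0)) ↔
      ∀ t, s < t → Tendsto (fun n => hIter g n t / hIter g n s) atTop atTop) := by
  have hpos : ∀ {t : ℝ}, 0 < t → ∀ n, 0 < hIter g n t := fun ht n =>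
    RegAux.hIter_pos hf hg ht n
  have hlt : ∀ {t u : ℝ}, 0 < t → t < u → ∀ n, hIter g n t < hIter g n u := fun ht htu n =>
    RegAux.hIter_lt hf hg ht htu n
  have hmeas : ∀ {t : ℝ}, 0 < t → AEMeasurable (W t) μ := fun ht => RegAux.aemeas_W hZ hW ht
  have hint : ∀ {t : ℝ}, 0 < t → ∫ ω, expNeg (W t ω) ∂μ = Real.exp (-t) := fun ht =>
    RegAux.integral_W hf hg hZ hW ht
  have hI : ∀ {t : ℝ}, 0 < t → Integrable (fun ω => expNeg (W t ω)) μ := fun ht =>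
    RegAux.integrable_comp RegAux.measurable_expNeg RegAux.expNeg_nonneg RegAux.expNeg_le_one
      (hmeas ht)
  have hIfin : Integrable (fun ω => RegAux.ffin (W s ω)) μ :=
    RegAux.integrable_comp RegAux.measurable_ffin
      (fun w => (RegAux.expNeg_nonneg w).trans (RegAux.expNeg_le_ffin w))
      (fun w => by unfold RegAux.ffin; split_ifs <;> simp) (hmeas hs)
  have hIzero : Integrable (fun ω => RegAux.fzero (W s ω)) μ :=
    RegAux.integrable_comp RegAux.measurable_fzero
      (fun w => by unfold RegAux.fzero; split_ifs <;> simp)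
      (fun w => (RegAux.fzero_le_expNeg w).trans (RegAux.expNeg_le_one w)) (hmeas hs)
  have hne : ∀ {t : ℝ}, 0 < t → t ≠ s → ¬ (∀ᵐ ω ∂μ, W t ω = W s ω) := by
    intro t ht hts h
    have : ∫ ω, expNeg (W t ω) ∂μ = ∫ ω, expNeg (W s ω) ∂μ :=
      integral_congr_ae (h.mono fun ω hω => by simp only [hω])
    rw [hint ht, hint hs, Real.exp_eq_exp] at this
    exact hts (by linarith)
  have h1 : (∀ᵐ ω ∂μ, W s ω = 0 ∨ W s ω = ∞) →
      ∀ t, 0 < t → t < s → Tendsto (fun n => hIter g n t / hIter g n s) atTop (𝓝 0) := by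
    intro hR t ht hts
    by_contra hcon
    have : ∃ ε > 0, ∃ᶠ n in atTop, ε ≤ hIter g n t / hIter g n s := by
      by_contra hc
      push Not at hc
      refine hcon (tendsto_order.2 ⟨fun a ha => Eventually.of_forall fun n =>
        ha.trans (div_pos (hpos ht n) (hpos hs n)), fun a ha => ?_⟩)
      simpa using hc a ha
    obtain ⟨ε, hε, hfr⟩ := this
    refine hne ht hts.ne ?_
    filter_upwards [hR, hW t ht, hW s hs] with ω hω ht' hs'
    rcases hω with h0 | hinf
    · have := RegAux.W_le_of_freq (C := 1) zero_le_one
        (Frequently.of_forall fun n => by rw [one_mul]; exact (hlt ht hts n).le) ht' hs'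
      rw [h0] at this ⊢
      simpa using this
    · have := RegAux.W_le_of_freq (C := ε⁻¹) (by positivity) (hfr.mono fun n hn => by
        rw [le_div_iff₀ (hpos hs n)] at hn
        rw [inv_mul_eq_div, le_div_iff₀ hε]; linarith) hs' ht'
      rw [hinf] at this ⊢
      by_contra hc
      exact (ENNReal.mul_ne_top ENNReal.ofReal_ne_top hc) (top_le_iff.1 this)
  have h2 : (∀ t, 0 < t → t < s →
      Tendsto (fun n => hIter g n t / hIter g n s) atTop (𝓝 0)) →
      (∀ᵐ ω ∂μ, W s ω = 0 ∨ W s ω = ∞) := by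
    intro hr
    have hle : ∫ ω, RegAux.ffin (W s ω) ∂μ ≤ Real.exp (-s) := by
      refine RegAux.exp_neg_le_of_lt hs fun t ht hts => ?_
      rw [← hint ht]
      refine integral_mono_ae hIfin (hI ht) ?_
      filter_upwards [hW t ht, hW s hs] with ω ht' hs'
      by_cases hinf : W s ω = ∞
      · simpa [RegAux.ffin, hinf] using RegAux.expNeg_nonneg _
      · have hr' := (ENNReal.continuous_ofReal.tendsto _).comp (hr t ht hts)
        rw [ENNReal.ofReal_zero] at hr'
        have := RegAux.W_eq_of_ratio (hpos ht) (hpos hs) hr' (Or.inr hinf) (Or.inr (by simp))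
          ht' hs'
        rw [zero_mul] at this
        simp [RegAux.ffin, hinf, this, RegAux.expNeg_zero]
    have hae : ∀ᵐ ω ∂μ, expNeg (W s ω) ≤ RegAux.ffin (W s ω) :=
      ae_of_all _ fun ω => RegAux.expNeg_le_ffin _
    have heq := (integral_eq_iff_of_ae_le (hI hs) hIfin hae).1
      (le_antisymm (integral_mono_ae (hI hs) hIfin hae) (by rw [hint hs]; exact hle))
    exact heq.mono fun ω hω => RegAux.eq_of_expNeg_eq_ffin hω
  have h3 : (∀ᵐ ω ∂μ, W s ω = 0 ∨ W s ω = ∞) →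
      ∀ t, s < t → Tendsto (fun n => hIter g n t / hIter g n s) atTop atTop := by
    intro hR t hst
    have ht : 0 < t := hs.trans hst
    by_contra hcon
    have : ∃ C > 0, ∃ᶠ n in atTop, hIter g n t / hIter g n s ≤ C := by
      by_contra hc
      push Not at hc
      refine hcon (tendsto_atTop.2 fun b => ?_)
      have := hc (max b 1) (by positivity)
      filter_upwards [this] with n hn
      exact (le_max_left _ _).trans hn.le
    obtain ⟨C, hC, hfr⟩ := this
    refine hne ht hst.ne' ?_
    filter_upwards [hR, hW t ht, hW s hs] with ω hω ht' hs'
    rcases hω with h0 | hinf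
    · have := RegAux.W_le_of_freq (C := C) hC.le (hfr.mono fun n hn => by
        rwa [div_le_iff₀ (hpos hs n)] at hn) ht' hs'
      rw [h0] at this ⊢
      simpa using this
    · have := RegAux.W_le_of_freq (C := 1) zero_le_one
        (Frequently.of_forall fun n => by rw [one_mul]; exact (hlt hs hst n).le) hs' ht'
      rw [hinf] at this ⊢
      simpa using this
  have h4 : (∀ t, s < t → Tendsto (fun n => hIter g n t / hIter g n s) atTop atTop) →
      (∀ᵐ ω ∂μ, W s ω = 0 ∨ W s ω = ∞) := by
    intro hr
    have hle : Real.exp (-s) ≤ ∫ ω, RegAux.fzero (W s ω) ∂μ := by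
      refine RegAux.le_exp_neg_of_gt fun t hst => ?_
      have ht : 0 < t := hs.trans hst
      rw [← hint ht]
      refine integral_mono_ae (hI ht) hIzero ?_
      filter_upwards [hW t ht, hW s hs] with ω ht' hs'
      by_cases h0 : W s ω = 0
      · simpa [RegAux.fzero, h0] using RegAux.expNeg_le_one _
      · have hr' := ENNReal.tendsto_ofReal_nhds_top.2 (hr t hst)
        have := RegAux.W_eq_of_ratio (hpos ht) (hpos hs) hr' (Or.inl (by simp)) (Or.inl h0)
          ht' hs'
        rw [ENNReal.top_mul h0] at this
        simp [RegAux.fzero, h0, this, RegAux.expNeg_top]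
    have hae : ∀ᵐ ω ∂μ, RegAux.fzero (W s ω) ≤ expNeg (W s ω) :=
      ae_of_all _ fun ω => RegAux.fzero_le_expNeg _
    have heq := (integral_eq_iff_of_ae_le hIzero (hI hs) hae).1
      (le_antisymm (integral_mono_ae hIzero (hI hs) hae) (by rw [hint hs]; exact hle))
    exact heq.mono fun ω hω => RegAux.eq_of_fzero_eq_expNeg hω
  rw [RegAux.reg_iff_ae (hmeas hs)]
  exact ⟨⟨h1, h2⟩, ⟨fun h => h3 (h2 h), fun h => h1 (h4 h)⟩⟩

end
end

section
/- Let U:[0,∞)→[0,∞) be an increasing slowly varying function with U(0)=0 and lim_{x→∞}U(x)=∞, and define V(x) := inf{y ≥ 0 : U(y) ≥ x} for 0 ≤ x < ∞. Then U(V(x)) ∼ x as x → ∞, i.e. lim_{x→∞} U(V(x))/x = 1. -/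
open MeasureTheory Filter Topology Set
open scoped ENNReal

noncomputable section

/-- Let `U : [0,∞) → [0,∞)` be an increasing slowly varying function
with `U 0 = 0` and `U x → ∞`, and `V x = inf{y ≥ 0 : U y ≥ x}`. Then `U (V x) ∼ x`
as `x → ∞`. -/
theorem slowly_varying_inverse_asymptotic
    (U : ℝ → ℝ) (hmap : ∀ x, 0 ≤ x → 0 ≤ U x) (hmono : MonotoneOn U (Set.Ici 0))
    (h0 : U 0 = 0) (htop : Tendsto U atTop atTop) (hsv : SlowlyVarying U) :
    Tendsto (fun x => U (Vfun U x) / x) atTop (𝓝 1) := by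
  have hne : ∀ x, {y : ℝ | 0 ≤ y ∧ x ≤ U y}.Nonempty := by
    intro x
    obtain ⟨y, hy1, hy2⟩ := ((eventually_ge_atTop (0 : ℝ)).and (htop.eventually_ge_atTop x)).exists
    exact ⟨y, hy1, hy2⟩
  have hbdd : ∀ x, BddBelow {y : ℝ | 0 ≤ y ∧ x ≤ U y} := fun x => ⟨0, fun y hy => hy.1⟩
  have hV : Tendsto (Vfun U) atTop atTop := by
    rw [tendsto_atTop]
    intro M
    filter_upwards [eventually_gt_atTop (U (max M 0))] with x hx
    refine le_csInf (hne x) ?_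
    rintro y ⟨hy0, hy⟩
    by_contra hlt
    push Not at hlt
    have := hmono (show y ∈ Set.Ici (0 : ℝ) from hy0) (show max M 0 ∈ Set.Ici (0 : ℝ) from Set.mem_Ici.2 (le_max_right _ _))
      (hlt.le.trans (le_max_left _ _))
    linarith
  have hlow := ((hsv 2 (by norm_num)).comp hV).inv₀ one_ne_zero
  have hup := ((hsv (1 / 2) (by norm_num)).comp hV).inv₀ one_ne_zero
  rw [inv_one] at hlow hup
  have hhalf : Tendsto (fun x => 1 / 2 * Vfun U x) atTop atTop :=
    hV.const_mul_atTop (by norm_num)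
  refine tendsto_of_tendsto_of_tendsto_of_le_of_le' hlow hup ?_ ?_
  · filter_upwards [hV.eventually_gt_atTop 0, eventually_gt_atTop 0] with x hv hx
    simp only [Function.comp_apply, inv_div]
    have h2 : x ≤ U (2 * Vfun U x) := by
      obtain ⟨y, ⟨hy0, hy⟩, hlt⟩ := exists_lt_of_csInf_lt (hne x)
        (show sInf {y : ℝ | 0 ≤ y ∧ x ≤ U y} < 2 * Vfun U x by
          change Vfun U x < _
          linarith)
      exact hy.trans (hmono hy0 (show (0 : ℝ) ≤ _ by positivity) hlt.le)
    exact div_le_div_of_nonneg_left (hmap _ hv.le) hx h2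
  · filter_upwards [hV.eventually_gt_atTop 0, eventually_gt_atTop 0,
      (htop.comp hhalf).eventually_gt_atTop 0] with x hv hx hU
    simp only [Function.comp_apply, inv_div] at hU ⊢
    have h2 : U (1 / 2 * Vfun U x) ≤ x := by
      by_contra hlt
      push Not at hlt
      have : Vfun U x ≤ 1 / 2 * Vfun U x := csInf_le (hbdd x) ⟨by positivity, hlt.le⟩
      linarith
    exact div_le_div_of_nonneg_left (hmap _ hv.le) hU h2

end
end

section
/- A point s ∈ (0,∞) is regular for (f_i) if and only if ∏_{n=0}^{∞} Q_n(f_{n+1}^{(−1)}(e^{−s})) = 0, where Q_i(x) := f_i'(x)(1−x)/(1−f_i(x)) for x ∈ [0,1) and f_{n}^{(−1)} is the inverse on [0,1] of the composition f_n(x) = f_0(f_1(⋯(f_{n−1}(x))⋯)). -/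
open MeasureTheory Filter Topology Set
open scoped ENNReal

noncomputable section

/-- Coefficient representation of a generating function. -/
def RepC (p : ℕ → ℝ) (f : ℝ → ℝ) : Prop :=
  (∀ j, 0 ≤ p j) ∧ p 0 = 0 ∧ HasSum p 1 ∧
    ∀ x ∈ Set.Icc (0 : ℝ) 1, HasSum (fun j => p j * x ^ j) (f x)

lemma RepC.one {p : ℕ → ℝ} {f : ℝ → ℝ} (h : RepC p f) : f 1 = 1 := by
  have h1 := h.2.2.2 1 (by simp)
  simp only [one_pow, mul_one] at h1
  exact h1.unique h.2.2.1

lemma RepC.zero {p : ℕ → ℝ} {f : ℝ → ℝ} (h : RepC p f) : f 0 = 0 := by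
  have h1 := h.2.2.2 0 (by simp)
  have h2 : (fun j => p j * (0:ℝ) ^ j) = fun _ => 0 := by
    funext j
    rcases Nat.eq_zero_or_pos j with rfl | hj
    · simp [h.2.1]
    · simp [hj.ne']
  rw [h2] at h1
  exact h1.unique hasSum_zero

lemma RepC.nonneg {p : ℕ → ℝ} {f : ℝ → ℝ} (h : RepC p f) {x : ℝ} (hx : x ∈ Icc (0:ℝ) 1) :
    0 ≤ f x :=
  (h.2.2.2 x hx).nonneg fun j => mul_nonneg (h.1 j) (pow_nonneg hx.1 j)

lemma RepC.le_self {p : ℕ → ℝ} {f : ℝ → ℝ} (h : RepC p f) {x : ℝ} (hx : x ∈ Icc (0:ℝ) 1) :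
    f x ≤ x := by
  have h2 : HasSum (fun j => p j * x) (1 * x) := h.2.2.1.mul_right x
  rw [one_mul] at h2
  refine hasSum_le (fun j => ?_) (h.2.2.2 x hx) h2
  rcases Nat.eq_zero_or_pos j with rfl | hj
  · simp [h.2.1]
  · exact mul_le_mul_of_nonneg_left (pow_le_of_le_one hx.1 hx.2 hj.ne') (h.1 j)

lemma RepC.mapsTo {p : ℕ → ℝ} {f : ℝ → ℝ} (h : RepC p f) {x : ℝ} (hx : x ∈ Icc (0:ℝ) 1) :
    f x ∈ Icc (0:ℝ) 1 := ⟨h.nonneg hx, (h.le_self hx).trans hx.2⟩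

lemma repC_id : RepC (fun j => if j = 1 then 1 else 0) (fun x => x) := by
  refine ⟨fun j => by positivity, by simp, hasSum_ite_eq 1 1, fun x hx => ?_⟩
  convert hasSum_single (f := fun j : ℕ => (if j = 1 then (1:ℝ) else 0) * x ^ j) 1 ?_ using 1
  · simp
  · intro j hj; simp [hj]

/-- Coefficients of the `j`-th power. -/
def powC (q : ℕ → ℝ) : ℕ → ℕ → ℝ
  | 0, k => if k = 0 then 1 else 0
  | j + 1, k => ∑ ab ∈ Finset.HasAntidiagonal.antidiagonal k, powC q j ab.1 * q ab.2

lemma powC_nonneg {q : ℕ → ℝ} (hq : ∀ j, 0 ≤ q j) : ∀ j k, 0 ≤ powC q j k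
  | 0, k => by unfold powC; split_ifs <;> norm_num
  | j + 1, k => by
    unfold powC
    exact Finset.sum_nonneg fun ab _ => mul_nonneg (powC_nonneg hq j _) (hq _)

lemma powC_zero {q : ℕ → ℝ} (hq : q 0 = 0) (j : ℕ) (hj : j ≠ 0) : powC q j 0 = 0 := by
  obtain ⟨j, rfl⟩ := Nat.exists_eq_succ_of_ne_zero hj
  simp [powC, hq]

lemma powC_hasSum {q : ℕ → ℝ} {f : ℝ → ℝ} (h : RepC q f) {x : ℝ} (hx : x ∈ Icc (0:ℝ) 1) (j : ℕ) :
    HasSum (fun k => powC q j k * x ^ k) (f x ^ j) := by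
  induction j with
  | zero =>
    convert hasSum_single (f := fun k : ℕ => powC q 0 k * x ^ k) 0 ?_ using 1
    · simp [powC]
    · intro k hk; simp [powC, hk]
  | succ j ih =>
    have h2 := h.2.2.2 x hx
    have n1 : Summable fun k => ‖powC q j k * x ^ k‖ := ih.summable.norm
    have n2 : Summable fun k => ‖q k * x ^ k‖ := h2.summable.norm
    have e := tsum_mul_tsum_eq_tsum_sum_antidiagonal_of_summable_norm n1 n2
    have s := (summable_norm_sum_mul_antidiagonal_of_summable_norm n1 n2).of_norm
    have hh := s.hasSum
    rw [← e, ih.tsum_eq, h2.tsum_eq] at hh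
    rw [pow_succ]
    refine Eq.mpr (congrArg (fun F => HasSum F (f x ^ j * f x)) (funext fun k => ?_)) hh
    simp only [powC]
    rw [Finset.sum_mul]
    refine Finset.sum_congr rfl fun ab hab => ?_
    rw [← Finset.HasAntidiagonal.mem_antidiagonal.1 hab, pow_add]
    ring

lemma comp_aux {p q : ℕ → ℝ} {F f : ℝ → ℝ} (hF : RepC p F) (h : RepC q f) {x : ℝ}
    (hx : x ∈ Icc (0:ℝ) 1) :
    HasSum (fun k => (∑' j, p j * powC q j k) * x ^ k) (F (f x)) := by
  have hrow : ∀ j, HasSum (fun k => p j * (powC q j k * x ^ k)) (p j * f x ^ j) :=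
    fun j => (powC_hasSum h hx j).mul_left _
  have hFx := hF.2.2.2 (f x) (h.mapsTo hx)
  have hs : Summable (fun jk : ℕ × ℕ => p jk.1 * (powC q jk.1 jk.2 * x ^ jk.2)) := by
    rw [summable_prod_of_nonneg]
    · refine ⟨fun j => (hrow j).summable, ?_⟩
      simp only [fun j => (hrow j).tsum_eq]
      exact hFx.summable
    · intro jk
      exact mul_nonneg (hF.1 _) (mul_nonneg (powC_nonneg h.1 _ _) (pow_nonneg hx.1 _))
  have hS : HasSum (fun jk : ℕ × ℕ => p jk.1 * (powC q jk.1 jk.2 * x ^ jk.2)) (F (f x)) := by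
    have := hs.hasSum
    rwa [(this.prod_fiberwise hrow).unique hFx] at this
  have hS' : HasSum (fun kj : ℕ × ℕ => p kj.2 * (powC q kj.2 kj.1 * x ^ kj.1)) (F (f x)) :=
    (Equiv.prodComm ℕ ℕ).hasSum_iff.2 hS
  have := hS'.prod_fiberwise (fun k => (hS'.summable.prod_factor k).hasSum)
  convert this using 2 with k
  rw [← tsum_mul_right]
  simp only [mul_assoc]

lemma RepC.comp {p q : ℕ → ℝ} {F f : ℝ → ℝ} (hF : RepC p F) (h : RepC q f) :
    RepC (fun k => ∑' j, p j * powC q j k) (fun x => F (f x)) := by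
  refine ⟨fun k => tsum_nonneg fun j => mul_nonneg (hF.1 _) (powC_nonneg h.1 _ _), ?_, ?_,
    fun x hx => comp_aux hF h hx⟩
  · have : ∀ j, p j * powC q j 0 = 0 := by
      intro j
      rcases Nat.eq_zero_or_pos j with rfl | hj
      · simp [hF.2.1]
      · simp [powC_zero h.2.1 j hj.ne']
    simp [this]
  · have := comp_aux hF h (x := 1) (by simp)
    simpa [h.one, hF.one] using this

lemma RepC.deriv_sum {p : ℕ → ℝ} {f : ℝ → ℝ} (h : RepC p f) {x : ℝ} (hx : x ∈ Ioo (0:ℝ) 1) :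
    ∃ D, HasDerivAt f D x ∧ HasSum (fun j : ℕ => p j * (j * x ^ (j - 1))) D := by
  obtain ⟨r, hr1, hr2⟩ := exists_between hx.2
  have hr0 : 0 < r := hx.1.trans hr1
  have hple : ∀ j, p j ≤ 1 := fun j => le_hasSum h.2.2.1 j fun i _ => h.1 i
  have hsr : Summable (fun j : ℕ => (j : ℝ) * r ^ (j - 1)) := by
    have := summable_pow_mul_geometric_of_norm_lt_one (R := ℝ) 1
      (r := r) (by rw [Real.norm_eq_abs, abs_of_pos hr0]; exact hr2)
    refine (this.mul_right r⁻¹).congr fun j => ?_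
    rcases Nat.eq_zero_or_pos j with rfl | hj
    · simp
    · obtain ⟨j, rfl⟩ := Nat.exists_eq_succ_of_ne_zero hj.ne'
      simp only [Nat.succ_eq_add_one, Nat.add_sub_cancel, pow_succ]
      field_simp
  have hbd : ∀ (j : ℕ) (y : ℝ), y ∈ Ioo (0:ℝ) r →
      ‖p j * (j * y ^ (j - 1))‖ ≤ (j : ℝ) * r ^ (j - 1) := by
    intro j y hy
    have h0 : 0 ≤ (j : ℝ) * y ^ (j - 1) := mul_nonneg (Nat.cast_nonneg _) (pow_nonneg hy.1.le _)
    rw [Real.norm_eq_abs, abs_of_nonneg (mul_nonneg (h.1 j) h0)]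
    refine (mul_le_of_le_one_left h0 (hple j)).trans ?_
    exact mul_le_mul_of_nonneg_left (pow_le_pow_left₀ hy.1.le hy.2.le _) (Nat.cast_nonneg _)
  have hxr : x ∈ Ioo (0:ℝ) r := ⟨hx.1, hr1⟩
  have key := hasDerivAt_tsum_of_isPreconnected (g := fun j y => p j * y ^ j)
    (g' := fun (j : ℕ) y => p j * (j * y ^ (j - 1))) hsr isOpen_Ioo isPreconnected_Ioo
    (fun j y _ => (hasDerivAt_pow j y).const_mul (p j)) hbd hxr
    (h.2.2.2 x ⟨hx.1.le, hx.2.le⟩).summable hxr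
  refine ⟨_, key.congr_of_eventuallyEq ?_, ?_⟩
  · filter_upwards [isOpen_Ioo.mem_nhds hx] with y hy
    exact (h.2.2.2 y ⟨hy.1.le, hy.2.le⟩).tsum_eq.symm
  · exact (Summable.of_norm_bounded hsr fun j => hbd j x hxr).hasSum

/-- Tangent line inequality. -/
lemma RepC.tangent {p : ℕ → ℝ} {f : ℝ → ℝ} (h : RepC p f) {x y : ℝ} (hx : x ∈ Ioo (0:ℝ) 1)
    (hy : y ∈ Ioo (0:ℝ) 1) : deriv f x * (y - x) ≤ f y - f x := by
  obtain ⟨D, hD, hsum⟩ := h.deriv_sum hx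
  rw [hD.deriv]
  refine hasSum_le (fun j => ?_) (hsum.mul_right (y - x))
    ((h.2.2.2 y ⟨hy.1.le, hy.2.le⟩).sub (h.2.2.2 x ⟨hx.1.le, hx.2.le⟩))
  have hc : ConvexOn ℝ (Ici 0) fun z : ℝ => z ^ j := convexOn_pow j
  have : (j * x ^ (j - 1)) * (y - x) ≤ y ^ j - x ^ j := by
    have hd := hasDerivAt_pow j x
    rcases lt_trichotomy x y with hxy | rfl | hxy
    · have := hc.le_slope_of_hasDerivAt hx.1.le hy.1.le hxy hd
      rw [slope_def_field, le_div_iff₀ (sub_pos.2 hxy)] at this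
      exact this
    · simp
    · have := hc.slope_le_of_hasDerivAt hy.1.le hx.1.le hxy hd
      rw [slope_def_field, div_le_iff₀ (sub_pos.2 hxy)] at this
      linarith
  rw [mul_assoc, ← mul_sub]
  exact mul_le_mul_of_nonneg_left this (h.1 j)

lemma exp_bound {c d w M : ℝ} (hc : 0 < c) (hw : 0 ≤ w)
    (hM : Real.exp (-(c * M)) ≤ d) (hd : 0 ≤ d) :
    Real.exp (-(c * w)) - Real.exp (-w) ≤ d + Real.exp M * (w * Real.exp (-w)) := by
  rcases le_total M w with h | h
  · have h1 : Real.exp (-(c * w)) ≤ Real.exp (-(c * M)) := by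
      apply Real.exp_le_exp.2
      have := mul_le_mul_of_nonneg_left h hc.le
      linarith
    have := Real.exp_pos (-w)
    have : 0 ≤ Real.exp M * (w * Real.exp (-w)) := by positivity
    linarith
  · have h1 : Real.exp (-(c * w)) ≤ 1 := Real.exp_le_one_iff.2 (by
      have := mul_nonneg hc.le hw
      linarith)
    have h2 : 1 - w ≤ Real.exp (-w) := by linarith [Real.add_one_le_exp (-w)]
    have h3 : 1 ≤ Real.exp M * Real.exp (-w) := by
      rw [← Real.exp_add]; exact Real.one_le_exp (by linarith)
    nlinarith [mul_le_mul_of_nonneg_left h3 hw]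

lemma RepC.lower {p : ℕ → ℝ} {f : ℝ → ℝ} (h : RepC p f) {u v c d M : ℝ} (hu : 0 < u) (hv : 0 < v)
    (hc : 0 < c) (hcv : c * u ≤ v) (hM : Real.exp (-(c * M)) ≤ d) (hd : 0 ≤ d) :
    f (Real.exp (-v)) - f (Real.exp (-u)) ≤
      d + Real.exp M * (deriv f (Real.exp (-u)) * (1 - Real.exp (-u))) := by
  have mem : ∀ {z : ℝ}, 0 < z → Real.exp (-z) ∈ Ioo (0:ℝ) 1 := fun {z} hz =>
    ⟨Real.exp_pos _, Real.exp_lt_one_iff.2 (by linarith)⟩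
  obtain ⟨D, hD, hsum⟩ := h.deriv_sum (mem hu)
  rw [hD.deriv]
  have D0 : 0 ≤ D := hsum.nonneg fun j => mul_nonneg (h.1 j) (by positivity)
  have hux : u * Real.exp (-u) ≤ 1 - Real.exp (-u) := by
    have h1 := Real.add_one_le_exp u
    have h2 : Real.exp u * Real.exp (-u) = 1 := by rw [← Real.exp_add]; simp
    nlinarith [Real.exp_pos (-u)]
  have main : f (Real.exp (-v)) - f (Real.exp (-u)) ≤
      1 * d + D * (Real.exp M * (u * Real.exp (-u))) := by
    refine hasSum_le (fun j => ?_)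
      ((h.2.2.2 _ ⟨(mem hv).1.le, (mem hv).2.le⟩).sub (h.2.2.2 _ ⟨(mem hu).1.le, (mem hu).2.le⟩))
      ((h.2.2.1.mul_right d).add (hsum.mul_right _))
    rcases Nat.eq_zero_or_pos j with rfl | hj
    · simp [h.2.1]
    have hb := exp_bound (w := j * u) hc (by positivity) hM hd
    have e1 : Real.exp (-v) ^ j ≤ Real.exp (-(c * (j * u))) := by
      rw [← Real.exp_nat_mul]
      apply Real.exp_le_exp.2
      have := mul_le_mul_of_nonneg_left hcv (Nat.cast_nonneg (α := ℝ) j)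
      linarith
    have e2 : Real.exp (-u) ^ j = Real.exp (-(j * u)) := by
      rw [← Real.exp_nat_mul]; ring_nf
    have e3 : Real.exp (-u) ^ (j - 1) * Real.exp (-u) = Real.exp (-(j * u)) := by
      rw [← pow_succ, Nat.sub_add_cancel hj, e2]
    have : p j * (Real.exp (-v) ^ j - Real.exp (-u) ^ j) ≤
        p j * (d + Real.exp M * (j * u * Real.exp (-(j * u)))) :=
      mul_le_mul_of_nonneg_left (by linarith) (h.1 j)
    rw [← e3] at this
    linarith
  have := mul_le_mul_of_nonneg_left (mul_le_mul_of_nonneg_left hux (Real.exp_pos M).le) D0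
  linarith

/-- The composition `f 0 ∘ ⋯ ∘ f (n-1)`. -/
def compF (f : ℕ → ℝ → ℝ) : ℕ → ℝ → ℝ
  | 0, x => x
  | n + 1, x => compF f n (f n x)

lemma compF_rep {f : ℕ → ℝ → ℝ} (hf : ∀ i, ∃ p, RepC p (f i)) (n : ℕ) : ∃ p, RepC p (compF f n) := by
  induction n with
  | zero => exact ⟨_, repC_id⟩
  | succ n ih =>
    obtain ⟨p, hp⟩ := ih
    obtain ⟨q, hq⟩ := hf n
    exact ⟨_, hp.comp hq⟩

lemma g_mem {f g : ℕ → ℝ → ℝ} (hf : ∀ i, ∃ p, RepC p (f i))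
    (hg : ∀ i, IsInvOn01 (g i) (f i))
    (n : ℕ) {x : ℝ} (hx : x ∈ Ioo (0:ℝ) 1) : g n x ∈ Ioo (0:ℝ) 1 := by
  obtain ⟨p, hp⟩ := hf n
  obtain ⟨-, h2, h3⟩ := hg n x ⟨hx.1.le, hx.2.le⟩
  refine ⟨lt_of_le_of_ne h3.1 fun h => ?_, lt_of_le_of_ne h3.2 fun h => ?_⟩
  · rw [← h, hp.zero] at h2; exact hx.1.ne h2
  · rw [h, hp.one] at h2; exact hx.2.ne h2.symm

lemma inv_mem {f g : ℕ → ℝ → ℝ} (hf : ∀ i, ∃ p, RepC p (f i))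
    (hg : ∀ i, IsInvOn01 (g i) (f i))
    {x : ℝ} (hx : x ∈ Ioo (0:ℝ) 1) (n : ℕ) : fCompInv g n x ∈ Ioo (0:ℝ) 1 := by
  induction n with
  | zero => exact hx
  | succ n ih => exact g_mem hf hg n ih

lemma f_inv {f g : ℕ → ℝ → ℝ} (hf : ∀ i, ∃ p, RepC p (f i))
    (hg : ∀ i, IsInvOn01 (g i) (f i))
    {x : ℝ} (hx : x ∈ Ioo (0:ℝ) 1) (n : ℕ) :
    f n (fCompInv g (n + 1) x) = fCompInv g n x := by
  have := inv_mem hf hg hx n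
  exact (hg n _ ⟨this.1.le, this.2.le⟩).2.1

lemma compF_inv {f g : ℕ → ℝ → ℝ} (hf : ∀ i, ∃ p, RepC p (f i))
    (hg : ∀ i, IsInvOn01 (g i) (f i))
    {x : ℝ} (hx : x ∈ Ioo (0:ℝ) 1) (n : ℕ) : compF f n (fCompInv g n x) = x := by
  induction n with
  | zero => rfl
  | succ n ih => rw [compF, f_inv hf hg hx n, ih]

lemma inv_eq {f g : ℕ → ℝ → ℝ} (hf : ∀ i, ∃ p, RepC p (f i))
    (hg : ∀ i, IsInvOn01 (g i) (f i))
    {t : ℝ} (ht : 0 < t) (n : ℕ) :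
    0 < hIter g n t ∧ fCompInv g n (Real.exp (-t)) = Real.exp (-hIter g n t) := by
  have hx : Real.exp (-t) ∈ Ioo (0:ℝ) 1 := ⟨Real.exp_pos _, Real.exp_lt_one_iff.2 (by linarith)⟩
  have e : fCompInv g n (Real.exp (-t)) = Real.exp (-hIter g n t) := by
    induction n with
    | zero => rfl
    | succ n ih =>
      have := inv_mem hf hg hx (n + 1)
      rw [hIter, hfun, neg_neg, ← ih]
      exact (Real.exp_log this.1).symm
  refine ⟨?_, e⟩
  have := (inv_mem hf hg hx n).2
  rw [e, Real.exp_lt_one_iff] at this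
  linarith

lemma prod_eq {f g : ℕ → ℝ → ℝ} (hf : ∀ i, ∃ p, RepC p (f i))
    (hg : ∀ i, IsInvOn01 (g i) (f i))
    {x : ℝ} (hx : x ∈ Ioo (0:ℝ) 1) (N : ℕ) :
    ∏ n ∈ Finset.range N, Qfun (f n) (fCompInv g (n + 1) x) =
      deriv (compF f N) (fCompInv g N x) * (1 - fCompInv g N x) / (1 - x) := by
  induction N with
  | zero =>
    have h : compF f 0 = fun y => y := rfl
    have : 1 - x ≠ 0 := by have := hx.2; linarith
    simp [h, fCompInv, this]
  | succ N ih =>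
    rw [Finset.prod_range_succ, ih, Qfun, f_inv hf hg hx N]
    obtain ⟨p, hp⟩ := compF_rep hf N
    obtain ⟨q, hq⟩ := hf N
    obtain ⟨D, hD, -⟩ := hp.deriv_sum (inv_mem hf hg hx N)
    obtain ⟨E, hE, -⟩ := hq.deriv_sum (inv_mem hf hg hx (N + 1))
    have hD' := hD
    rw [← f_inv hf hg hx N] at hD
    have hc : HasDerivAt (compF f (N + 1)) (D * E) (fCompInv g (N + 1) x) :=
      HasDerivAt.comp _ hD hE
    rw [hc.deriv, hE.deriv, hD'.deriv]
    have h1 : 1 - x ≠ 0 := by have := hx.2; linarith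
    have h2 : 1 - fCompInv g N x ≠ 0 := by have := (inv_mem hf hg hx N).2; linarith
    field_simp

lemma main_iff {f g : ℕ → ℝ → ℝ} (hf : ∀ i, ∃ p, RepC p (f i))
    (hg : ∀ i, IsInvOn01 (g i) (f i))
    {s : ℝ} (hs : 0 < s) :
    AnalyticRegular g s ↔ Tendsto (fun N => deriv (compF f N) (Real.exp (-hIter g N s)) *
      (1 - Real.exp (-hIter g N s))) atTop (𝓝 0) := by
  have mem : ∀ {z : ℝ}, 0 < z → Real.exp (-z) ∈ Ioo (0:ℝ) 1 := fun {z} hz =>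
    ⟨Real.exp_pos _, Real.exp_lt_one_iff.2 (by linarith)⟩
  have hval : ∀ {t : ℝ}, 0 < t → ∀ n, compF f n (Real.exp (-hIter g n t)) = Real.exp (-t) := by
    intro t ht n
    rw [← (inv_eq hf hg ht n).2, compF_inv hf hg (mem ht)]
  have hpos : ∀ {t : ℝ}, 0 < t → ∀ n, 0 < hIter g n t := fun ht n => (inv_eq hf hg ht n).1
  constructor
  · intro hreg
    have hnn : ∀ N, 0 ≤ deriv (compF f N) (Real.exp (-hIter g N s)) *
        (1 - Real.exp (-hIter g N s)) := by
      intro N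
      obtain ⟨p, hp⟩ := compF_rep hf N
      have hm := mem (hpos hs N)
      obtain ⟨D, hD, hsum⟩ := hp.deriv_sum hm
      rw [hD.deriv]
      exact mul_nonneg (hsum.nonneg fun j => mul_nonneg (hp.1 j) (by positivity))
        (by linarith [hm.2])
    have key : ∀ t, 0 < t → t < s → ∀ᶠ N in atTop,
        deriv (compF f N) (Real.exp (-hIter g N s)) * (1 - Real.exp (-hIter g N s)) ≤
          2 * Real.exp s * (Real.exp (-t) - Real.exp (-s)) := by
      intro t ht hts
      filter_upwards [(hreg t ht hts).eventually_lt_const (show (0:ℝ) < 1/2 by norm_num)] with N hN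
      obtain ⟨p, hp⟩ := compF_rep hf N
      have hu := hpos hs N
      have hv := hpos ht N
      have htan := hp.tangent (mem hu) (mem hv)
      rw [hval ht, hval hs] at htan
      have hsu : Real.exp (-s) ≤ Real.exp (-hIter g N s) := by
        have := hp.le_self ⟨(mem hu).1.le, (mem hu).2.le⟩
        rwa [hval hs] at this
      have hn := hnn N
      obtain ⟨D, hD, hsum⟩ := hp.deriv_sum (mem hu)
      rw [hD.deriv] at htan ⊢
      have D0 : 0 ≤ D := hsum.nonneg fun j => mul_nonneg (hp.1 j) (by positivity)
      rw [div_lt_iff₀ hu] at hN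
      set u := hIter g N s
      set v := hIter g N t
      have hr : Real.exp (-(u/2)) ≤ Real.exp (-v) := Real.exp_le_exp.2 (by linarith)
      have hrr : Real.exp (-(u/2)) * Real.exp (-(u/2)) = Real.exp (-u) := by
        rw [← Real.exp_add]; ring_nf
      have hr1 := (mem (half_pos hu)).2
      have hr0 := (mem (half_pos hu)).1
      set r := Real.exp (-(u/2))
      have hrs : Real.exp (-s) ≤ r := by nlinarith
      have hes : Real.exp s * Real.exp (-s) = 1 := by rw [← Real.exp_add]; simp
      have h1 : 1 ≤ Real.exp s * r := by
        rw [← hes]; exact mul_le_mul_of_nonneg_left hrs (Real.exp_pos s).le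
      have h2 : 1 - Real.exp (-u) ≤ 2 * Real.exp s * (Real.exp (-v) - Real.exp (-u)) := by
        have a : 1 - Real.exp (-u) ≤ 2 * (1 - r) := by nlinarith
        have b : 1 - r ≤ Real.exp s * r * (1 - r) :=
          le_mul_of_one_le_left (by linarith) h1
        have c : Real.exp s * (r * (1 - r)) ≤ Real.exp s * (Real.exp (-v) - Real.exp (-u)) :=
          mul_le_mul_of_nonneg_left (by nlinarith) (Real.exp_pos s).le
        linarith
      calc D * (1 - Real.exp (-u))
          ≤ D * (2 * Real.exp s * (Real.exp (-v) - Real.exp (-u))) :=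
            mul_le_mul_of_nonneg_left h2 D0
        _ = 2 * Real.exp s * (D * (Real.exp (-v) - Real.exp (-u))) := by ring
        _ ≤ _ := mul_le_mul_of_nonneg_left htan (by positivity)
    have hcont : Tendsto (fun t => 2 * Real.exp s * (Real.exp (-t) - Real.exp (-s)))
        (𝓝[<] s) (𝓝 0) := by
      have : Continuous (fun t => 2 * Real.exp s * (Real.exp (-t) - Real.exp (-s))) := by fun_prop
      have := this.tendsto s
      simp only [sub_self, mul_zero] at this
      exact this.mono_left nhdsWithin_le_nhds
    rw [tendsto_order]
    refine ⟨fun a ha => Eventually.of_forall fun N => ha.trans_le (hnn N), fun a ha => ?_⟩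
    obtain ⟨t, ht1, ht2⟩ :=
      ((hcont.eventually_lt_const ha).and (Ioo_mem_nhdsLT hs)).exists
    filter_upwards [key t ht2.1 ht2.2] with N hN
    exact hN.trans_lt ht1
  · intro hP t ht hts
    rw [tendsto_order]
    refine ⟨fun a ha => Eventually.of_forall fun N =>
      ha.trans (div_pos (hpos ht N) (hpos hs N)), fun c hc => ?_⟩
    have hδ : 0 < Real.exp (-t) - Real.exp (-s) :=
      sub_pos.2 (Real.exp_lt_exp.2 (by linarith))
    set δ := Real.exp (-t) - Real.exp (-s)
    obtain ⟨M, hM⟩ : ∃ M, Real.exp (-(c * M)) ≤ δ / 2 := by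
      refine ⟨-Real.log (δ / 2) / c, ?_⟩
      have : -(c * (-Real.log (δ / 2) / c)) = Real.log (δ / 2) := by field_simp
      rw [this, Real.exp_log (by positivity)]
    have h0 := hP.eventually_lt_const (show 0 < δ / 2 / Real.exp M by positivity)
    filter_upwards [h0] with N hN
    by_contra hcon
    push Not at hcon
    rw [le_div_iff₀ (hpos hs N)] at hcon
    obtain ⟨p, hp⟩ := compF_rep hf N
    have := hp.lower (hpos hs N) (hpos ht N) hc hcon hM (by positivity)
    rw [hval ht, hval hs] at this
    rw [lt_div_iff₀ (Real.exp_pos M)] at hN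
    change δ ≤ _ at this
    linarith

/-- A point `s ∈ (0,∞)` is regular for `(f i)` if and only if
`∏_{n=0}^∞ Q_n(f_{n+1}^{(-1)}(e^{-s})) = 0`, where `Q i x = f_i'(x)(1-x)/(1-f_i(x))`
and `f_n^{(-1)}` is the inverse of the composition `f_0 ∘ f_1 ∘ ⋯ ∘ f_{n-1}`. -/
theorem regular_iff_infinite_product_zero
    (f g : ℕ → ℝ → ℝ) (hf : ∀ i, IsPGF (f i)) (hg : ∀ i, IsInvOn01 (g i) (f i))
    (s : ℝ) (hs : 0 < s) :
    AnalyticRegular g s ↔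
      Tendsto (fun N => ∏ n ∈ Finset.range N, Qfun (f n) (fCompInv g (n + 1) (Real.exp (-s))))
        atTop (𝓝 0) := by
  have hf' : ∀ i, ∃ p, RepC p (f i) := fun i => by
    obtain ⟨p, h1, h2, -, h3, h4⟩ := hf i
    exact ⟨p, h1, h2, h3, h4⟩
  have hx : Real.exp (-s) ∈ Ioo (0:ℝ) 1 := ⟨Real.exp_pos _, Real.exp_lt_one_iff.2 (by linarith)⟩
  have h1 : 1 - Real.exp (-s) ≠ 0 := by have := hx.2; linarith
  rw [main_iff hf' hg hs]
  simp only [prod_eq hf' hg hx]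
  simp only [fun n => (inv_eq hf' hg hs n).2]
  constructor
  · intro h
    simpa using h.div_const (1 - Real.exp (-s))
  · intro h
    have := h.mul_const (1 - Real.exp (-s))
    simpa [h1] using this

end
end

section
/- Let 0<ε<1, let (α_i)_{i≥0} be real numbers with 0 < α_i < 1−ε for all i, and set f_i(s) = 1 − (1−s)^{α_i} on [0,1]. Then: (i) for every s ∈ [0,1], the iterated inverse satisfies r_n(s) := 1 − f_{n−1}^{(−1)}(⋯(f_0^{(−1)}(1−s))⋯) = s^{1/(α_0 α_1 ⋯ α_{n−1})}; (ii) consequently d(s) := lim_n h_{n+1}(s)/h_n(θ,s) = 0 for every s ∈ (0,∞); (iii) with U(x) = log x and c_n = 1/(α_0 α_1 ⋯ α_{n−1}), one has lim_n U(1/h_n(s))/c_n = −log(1 − e^{−s}) ∈ (0,∞) for every s ∈ (0,∞). -/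
open MeasureTheory Filter Topology Set
open scoped ENNReal

noncomputable section

theorem aux_hIter (α : ℕ → ℝ) (g : ℕ → ℝ → ℝ) (hα : ∀ i, 0 < α i)
    (hg : ∀ i y, g i y = 1 - (1 - y) ^ (α i)⁻¹) (s : ℝ) (hs : 0 < s) (n : ℕ) :
    hIter g n s = -Real.log (1 - (1 - Real.exp (-s)) ^ (∏ i ∈ Finset.range n, α i)⁻¹) := by
  have hq0 : 0 < 1 - Real.exp (-s) := by
    have : Real.exp (-s) < 1 := Real.exp_lt_one_iff.2 (by linarith)
    linarith
  have hq1 : 1 - Real.exp (-s) < 1 := by linarith [Real.exp_pos (-s)]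
  induction n with
  | zero => simp [hIter]
  | succ n ih =>
    have hc : 0 < (∏ i ∈ Finset.range n, α i)⁻¹ := inv_pos.2 (Finset.prod_pos fun i _ => hα i)
    have hx := Real.rpow_lt_one hq0.le hq1 hc
    rw [hIter, hfun, ih, hg, neg_neg, Real.exp_log (by linarith), sub_sub_cancel,
      ← Real.rpow_mul hq0.le, Finset.prod_range_succ, mul_inv]

theorem aux_prod (ε : ℝ) (hε0 : 0 < ε) (hε1 : ε < 1) (α : ℕ → ℝ)
    (hα : ∀ i, 0 < α i ∧ α i < 1 - ε) :
    Tendsto (fun n => (∏ i ∈ Finset.range n, α i)⁻¹) atTop atTop := by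
  apply Tendsto.inv_tendsto_nhdsGT_zero
  rw [tendsto_nhdsWithin_iff]
  refine ⟨?_, Eventually.of_forall fun n => Finset.prod_pos fun i _ => (hα i).1⟩
  refine squeeze_zero (fun n => Finset.prod_nonneg fun i _ => (hα i).1.le) (fun n => ?_)
    (tendsto_pow_atTop_nhds_zero_of_lt_one (r := 1 - ε) (by linarith) (by linarith))
  calc ∏ i ∈ Finset.range n, α i ≤ ∏ i ∈ Finset.range n, (1 - ε) :=
        Finset.prod_le_prod (fun i _ => (hα i).1.le) (fun i _ => (hα i).2.le)
    _ = _ := by simp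

theorem aux_lower (x : ℝ) (hx1 : x < 1) : x ≤ -Real.log (1 - x) := by
  have := Real.log_le_sub_one_of_pos (x := 1 - x) (by linarith)
  linarith

theorem aux_upper (x : ℝ) (hx1 : x < 1) : -Real.log (1 - x) ≤ x / (1 - x) := by
  have h1 : 0 < 1 - x := by linarith
  have := Real.one_sub_inv_le_log_of_pos h1
  have h2 : x / (1 - x) = (1 - x)⁻¹ - 1 := by field_simp; ring
  linarith

theorem aux_rpow (q : ℝ) (hq0 : 0 < q) (hq1 : q < 1) (c : ℕ → ℝ) (hc : Tendsto c atTop atTop) :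
    Tendsto (fun n => q ^ c n) atTop (𝓝 0) :=
  (tendsto_rpow_atTop_of_base_lt_one q (by linarith) hq1).comp hc

/-- For `f i s = 1 - (1-s)^(α i)` with `0 < α i < 1 - ε`:
(i) the iterated inverse satisfies `r_n(s) = 1 - f_{n-1}^{(-1)}(⋯(f_0^{(-1)}(1-s))⋯)
 = s^{1/(α_0⋯α_{n-1})}` on `[0,1]`;
(ii) `d(s) = lim_n h_{n+1}(s)/h_n(θ,s) = 0` for every `s ∈ (0,∞)`;
(iii) with `U x = log x` and `c n = 1/(α_0⋯α_{n-1})`,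
`U(1/h_n(s))/c n → -log(1 - e^{-s}) ∈ (0,∞)` for every `s ∈ (0,∞)`. -/
theorem example_power_pgf
    (ε : ℝ) (hε0 : 0 < ε) (hε1 : ε < 1)
    (α : ℕ → ℝ) (hα : ∀ i, 0 < α i ∧ α i < 1 - ε)
    (f g : ℕ → ℝ → ℝ)
    (hfdef : ∀ i s, f i s = 1 - (1 - s) ^ (α i))
    (hgdef : ∀ i y, g i y = 1 - (1 - y) ^ (α i)⁻¹) :
    (∀ n : ℕ, ∀ s ∈ Set.Icc (0 : ℝ) 1,
      1 - fCompInv g n (1 - s) = s ^ (∏ i ∈ Finset.range n, α i)⁻¹) ∧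
    (∀ s : ℝ, 0 < s →
      Tendsto (fun n => hIter g (n + 1) s / hIter (fun i => g (i + 1)) n s) atTop (𝓝 0)) ∧
    (∀ s : ℝ, 0 < s →
      Tendsto (fun n => Real.log (1 / hIter g n s) / (∏ i ∈ Finset.range n, α i)⁻¹)
        atTop (𝓝 (-Real.log (1 - Real.exp (-s)))) ∧
      0 < -Real.log (1 - Real.exp (-s))) := by
  have hα0 : ∀ i, 0 < α i := fun i => (hα i).1
  have hP : ∀ n, 0 < (∏ i ∈ Finset.range n, α i)⁻¹ := fun n =>
    inv_pos.2 (Finset.prod_pos fun i _ => hα0 i)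
  refine ⟨?_, ?_, ?_⟩
  · intro n s hs
    induction n with
    | zero => simp [fCompInv]
    | succ n ih =>
      rw [fCompInv, hgdef, ih, sub_sub_cancel, ← Real.rpow_mul hs.1, Finset.prod_range_succ,
        mul_inv]
  · intro s hs
    have hq0 : 0 < 1 - Real.exp (-s) := by
      have : Real.exp (-s) < 1 := Real.exp_lt_one_iff.2 (by linarith)
      linarith
    have hq1 : 1 - Real.exp (-s) < 1 := by linarith [Real.exp_pos (-s)]
    have e1 := aux_hIter α g hα0 hgdef s hs
    have e2 := aux_hIter (fun i => α (i + 1)) (fun i => g (i + 1)) (fun i => hα0 _)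
      (fun i => hgdef _) s hs
    have hc := aux_prod ε hε0 hε1 (fun i => α (i + 1)) (fun i => hα _)
    have hP' : ∀ n, 0 < (∏ i ∈ Finset.range n, α (i + 1))⁻¹ := fun n =>
      inv_pos.2 (Finset.prod_pos fun i _ => hα0 _)
    generalize 1 - Real.exp (-s) = q at *
    have e3 : ∀ n, q ^ (∏ i ∈ Finset.range (n + 1), α i)⁻¹
        = (q ^ (∏ i ∈ Finset.range n, α (i + 1))⁻¹) ^ (α 0)⁻¹ := fun n => by
      rw [← Real.rpow_mul hq0.le, Finset.prod_range_succ', mul_inv]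
    simp only [e1, e2, e3]
    have hx0 : ∀ n, 0 < q ^ (∏ i ∈ Finset.range n, α (i + 1))⁻¹ := fun n =>
      Real.rpow_pos_of_pos hq0 _
    have hx1 : ∀ n, q ^ (∏ i ∈ Finset.range n, α (i + 1))⁻¹ < 1 := fun n =>
      Real.rpow_lt_one hq0.le hq1 (hP' n)
    have key : ∀ x : ℕ → ℝ, Tendsto x atTop (𝓝 0) → (∀ n, 0 < x n) → (∀ n, x n < 1) →
        Tendsto (fun n => -Real.log (1 - x n ^ (α 0)⁻¹) / -Real.log (1 - x n)) atTop (𝓝 0) := by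
      intro x hx hx0 hx1
      have ha : 1 < (α 0)⁻¹ := (one_lt_inv₀ (hα0 0)).2 (by linarith [(hα 0).2])
      generalize (α 0)⁻¹ = a at ha
      have hlim : Tendsto (fun n => x n ^ (a - 1) / (1 - x n ^ a)) atTop (𝓝 0) := by
        have h1 : Tendsto (fun n => x n ^ (a - 1)) atTop (𝓝 0) := by
          have := hx.rpow_const (p := a - 1) (Or.inr (by linarith))
          rwa [Real.zero_rpow (by linarith)] at this
        have h2 : Tendsto (fun n => x n ^ a) atTop (𝓝 0) := by
          have := hx.rpow_const (p := a) (Or.inr (by linarith))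
          rwa [Real.zero_rpow (by linarith)] at this
        have := h1.div (h2.const_sub 1) (by norm_num)
        rw [zero_div] at this; exact this
      have hya : ∀ n, x n ^ a < 1 := fun n =>
        Real.rpow_lt_one (hx0 n).le (hx1 n) (by linarith)
      have hy0 : ∀ n, 0 < x n ^ a := fun n => Real.rpow_pos_of_pos (hx0 n) _
      refine squeeze_zero (fun n => ?_) (fun n => ?_) hlim
      · exact div_nonneg ((hy0 n).le.trans (aux_lower _ (hya n)))
          ((hx0 n).le.trans (aux_lower _ (hx1 n)))
      · have h1 : 0 < 1 - x n ^ a := by linarith [hya n]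
        calc _ ≤ (x n ^ a / (1 - x n ^ a)) / x n :=
              div_le_div₀ (div_nonneg (hy0 n).le h1.le) (aux_upper _ (hya n)) (hx0 n)
                (aux_lower _ (hx1 n))
          _ = _ := by
              rw [Real.rpow_sub_one (hx0 n).ne', div_right_comm]
    exact key _ (aux_rpow q hq0 hq1 _ hc) hx0 hx1
  · intro s hs
    have hq0 : 0 < 1 - Real.exp (-s) := by
      have : Real.exp (-s) < 1 := Real.exp_lt_one_iff.2 (by linarith)
      linarith
    have hq1 : 1 - Real.exp (-s) < 1 := by linarith [Real.exp_pos (-s)]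
    have e1 := aux_hIter α g hα0 hgdef s hs
    have hc := aux_prod ε hε0 hε1 α hα
    generalize 1 - Real.exp (-s) = q at *
    refine ⟨?_, by linarith [Real.log_neg hq0 hq1]⟩
    simp only [e1]
    have key : ∀ c : ℕ → ℝ, Tendsto c atTop atTop → (∀ n, 0 < c n) →
        Tendsto (fun n => Real.log (1 / -Real.log (1 - q ^ c n)) / c n) atTop
          (𝓝 (-Real.log q)) := by
      intro c hc hc0
      have hx := aux_rpow q hq0 hq1 c hc
      have hlow : Tendsto (fun n => -Real.log q + Real.log (1 - q ^ c n) / c n) atTop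
          (𝓝 (-Real.log q)) := by
        have h1 : Tendsto (fun n => Real.log (1 - q ^ c n)) atTop (𝓝 0) := by
          have := (hx.const_sub 1).log (by norm_num)
          simpa using this
        simpa using (h1.div_atTop hc).const_add (-Real.log q)
      refine tendsto_of_tendsto_of_tendsto_of_le_of_le hlow tendsto_const_nhds
        (fun n => ?_) (fun n => ?_)
      all_goals
        have hx0 : 0 < q ^ c n := Real.rpow_pos_of_pos hq0 _
        have hx1 : q ^ c n < 1 := Real.rpow_lt_one hq0.le hq1 (hc0 n)
        have hl := aux_lower _ hx1
        have hu := aux_upper _ hx1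
        have hlx : Real.log (q ^ c n) = c n * Real.log q := Real.log_rpow hq0 _
        have hcn := hc0 n
        simp only [one_div, Real.log_inv]
      · rw [le_div_iff₀ hcn, add_mul, div_mul_cancel₀ _ hcn.ne']
        have := Real.log_le_log (by linarith) hu
        rw [Real.log_div hx0.ne' (by linarith)] at this
        linarith
      · rw [div_le_iff₀ hcn]
        have := Real.log_le_log hx0 hl
        linarith
    exact key _ hc hP

end
end
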